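/- arXiv:2410.13766 — 3 statements merged into one kernel-verified Lean document; each statement's English description precedes it below -/
import Mathlib

section
/- (Ellis–Nerurkar, part (c)) Let S be a weakly almost periodic G-flow. Then there is exactly one regular Borel probability measure on the Ellis semigroup E(S) that is invariant under the G-action g·p = (x ↦ g·x) ∘ p. -/
/-!
The proof turns `E = E(S)` into a compact semitopological monoid, finds a compact topological
group `L` inside it, and shows that the invariant measure has to be the Haar measure of `L`.

*Separate continuity.* The orbit closure of `f` in `C(S)` is weakly compact, hence closed for
pointwise convergence, so `f ∘ p` is continuous for each `p ∈ E` (`IsWAPFlow.exists_comp`).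
Thus the elements of `E` are continuous maps, multiplication in `E` is separately continuous,
and `G` has dense image in `E`.

*The minimal ideal.* A separately continuous function on a product of compact spaces has
oscillation at most `ε` in one variable, uniformly in the other, over some nonempty open set
(`exists_open_small_oscillation`). Minimality spreads this over a minimal left ideal `L`, so
that multiplication is jointly continuous on `E × L` (`IsMinimalLeft.continuousOn_mul`). It
follows that `L` has only one idempotent `u`, whence `L` is a compact topological group with
identity `u`. The same holds for right ideals, and comparing the two shows that `u` is central
(`exists_isMinimalLeft_central`).

*Existence.* The Haar probability measure of `L`, pushed forward to `E`, is invariant.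

*Uniqueness.* Let `μ` be invariant and regular. For `x ∈ S` the functional
`f ↦ ∫ f (q x) dμ(q)` is weakly continuous and constant on orbits, so `f` and `f ∘ u` have the
same integral. Expanding the square, `∫ (f (u q x) - f (q x))² dμ(q) = 0` for real `f`; by
regularity `u q = q` for almost every `q` (`IsWAPFlow.measure_ne_eq_zero`). As `u` is central,
`μ` is the push-forward of its image under `q ↦ q u`, and that image is a regular probability
measure on `L` invariant under the dense subgroup `G u`, that is, Haar measure
(`exists_measure_unique_on_fixed`).
-/

set_option linter.unusedSectionVars false

open MeasureTheory

variable {G : Type*} [Group G] {S : Type*} [TopologicalSpace S] [CompactSpace S] [T2Space S]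
  [Nonempty S] [MulAction G S] [ContinuousConstSMul G S]

/-- The Ellis semigroup of the `G`-flow `S`: the closure in the product space `S → S`
of the set of action maps `x ↦ g • x`. -/
def EllisSemigroup (G : Type*) [Group G] (S : Type*) [TopologicalSpace S]
    [MulAction G S] : Set (S → S) :=
  closure (Set.range fun g : G => fun x : S => g • x)

theorem ellisAct_mem (g : G) {p : S → S} (hp : p ∈ EllisSemigroup G S) :
    ((fun x : S => g • x) ∘ p) ∈ EllisSemigroup G S := by
  have hc : Continuous fun q : S → S => (fun x : S => g • x) ∘ q :=
    continuous_pi fun x => (continuous_const_smul g).comp (continuous_apply x)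
  have h1 : (fun q : S → S => (fun x : S => g • x) ∘ q) ''
      (Set.range fun h : G => fun x : S => h • x) ⊆
      Set.range fun h : G => fun x : S => h • x := by
    rintro _ ⟨_, ⟨h, rfl⟩, rfl⟩
    exact ⟨g * h, by funext x; simp [mul_smul]⟩
  have h2 : (fun q : S → S => (fun x : S => g • x) ∘ q) p ∈
      closure ((fun q : S → S => (fun x : S => g • x) ∘ q) ''
        (Set.range fun h : G => fun x : S => h • x)) :=
    image_closure_subset_closure_image hc ⟨p, hp, rfl⟩
  exact closure_mono h1 h2

/-- The `G`-action on the Ellis semigroup, `g • p = (x ↦ g • x) ∘ p`. -/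
def ellisAct (g : G) (p : EllisSemigroup G S) : EllisSemigroup G S :=
  ⟨(fun x : S => g • x) ∘ (p : S → S), ellisAct_mem g p.2⟩

/-- The action map `x ↦ g • x`, as a continuous self-map of `S`. -/
def smulCM (g : G) : C(S, S) := ⟨fun x => g • x, continuous_const_smul g⟩

/-- The `G`-flow `S` is weakly almost periodic if for every continuous complex-valued
function `f` on `S`, the `G`-orbit `{x ↦ f (g⁻¹ • x) : g ∈ G}` of `f` is relatively
compact in the weak topology on `C(S, ℂ)`. -/
def IsWAPFlow (G : Type*) [Group G] (S : Type*) [TopologicalSpace S] [CompactSpace S]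
    [MulAction G S] [ContinuousConstSMul G S] : Prop :=
  ∀ f : C(S, ℂ),
    IsCompact (closure ((toWeakSpace ℂ C(S, ℂ)) ''
      (Set.range fun g : G => f.comp (smulCM g⁻¹ : C(S, S)))))

/-! ### Oscillation of separately continuous functions -/

section SeparateContinuity
open Set Filter Topology

/-- A continuous function on a compact space that is constant on the fibres of a continuous
map `f` descends to a continuous function on the range of `f`. -/
theorem exists_factor_range {X Y : Type*} [TopologicalSpace X] [CompactSpace X]
    [TopologicalSpace Y] [T2Space Y] {f : X → Y} (hf : Continuous f) {h : X → ℝ}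
    (hh : Continuous h) (hc : ∀ x y, f x = f y → h x = h y) :
    ∃ c : C(range f, ℝ), ∀ x, c ⟨f x, mem_range_self x⟩ = h x := by
  have hq : IsQuotientMap (⟨rangeFactorization f, hf.rangeFactorization⟩ : C(X, range f)) :=
    IsQuotientMap.of_surjective_continuous rangeFactorization_surjective hf.rangeFactorization
  have hfac : Function.FactorsThrough (⟨h, hh⟩ : C(X, ℝ))
      (⟨rangeFactorization f, hf.rangeFactorization⟩ : C(X, range f)) :=
    fun x y hxy => hc x y (congrArg Subtype.val hxy)
  refine ⟨hq.lift ⟨h, hh⟩ hfac, fun x => ?_⟩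
  exact congrArg (fun k : C(X, ℝ) => k x) (hq.lift_comp ⟨h, hh⟩ hfac)

/-- A family of points of `M` that is `ε`-separated by a sequence of points of `P` is countable.
After identifying points of `closure (range d)` that no point of `M` tells apart, one is left
with a compact metrizable space `W`, because countably many points of `M` suffice to tell its
points apart; the functions `F · (m b)` are then `ε`-separated in the separable space `C(W)`. -/
theorem countable_of_separated {P M I B : Type*} [TopologicalSpace P] [CompactSpace P]
    [TopologicalSpace M] [CompactSpace M] [Countable I] [Nonempty M]
    {F : P → M → ℝ} (hF₁ : ∀ p, Continuous (F p)) (hF₂ : ∀ m, Continuous fun p => F p m)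
    (d : I → P) (m : B → M) {ε : ℝ} (hε : 0 < ε)
    (hsep : ∀ a b, a ≠ b → ∃ i, ε < |F (d i) (m a) - F (d i) (m b)|) : Countable B := by
  -- `Q` is the compact space of limits of the `d i`.
  let Q := closure (range d)
  have : CompactSpace Q := isCompact_iff_compactSpace.mp isClosed_closure.isCompact
  let ψ : M → I → ℝ := fun x i => F (d i) x
  have hψ : Continuous ψ := continuous_pi fun i => hF₁ (d i)
  have hfib : ∀ p ∈ Q, ∀ x y, ψ x = ψ y → F p x = F p y := by
    intro p hp x y hxy
    have hcl : IsClosed {p | F p x = F p y} := isClosed_eq (hF₂ x) (hF₂ y)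
    exact closure_minimal (by rintro _ ⟨i, rfl⟩; exact congrFun hxy i) hcl hp
  -- A sequence in `M` that detects equality on all of `M` of the functions `F p`, `p ∈ Q`.
  have hne : Nonempty (range ψ) := (range_nonempty ψ).to_subtype
  let c : ℕ → M := fun n => (TopologicalSpace.denseSeq (range ψ) n).2.choose
  have hc : ∀ n, (⟨ψ (c n), mem_range_self _⟩ : range ψ) = TopologicalSpace.denseSeq (range ψ) n :=
    fun n => Subtype.ext (TopologicalSpace.denseSeq (range ψ) n).2.choose_spec
  have hdet : ∀ p ∈ Q, ∀ q ∈ Q, (∀ n, F p (c n) = F q (c n)) → ∀ x, F p x = F q x := by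
    intro p hp q hq hpq x
    obtain ⟨a, ha⟩ := exists_factor_range hψ (hF₁ p) (hfib p hp)
    obtain ⟨b, hb⟩ := exists_factor_range hψ (hF₁ q) (hfib q hq)
    have hab : (a : range ψ → ℝ) = b := by
      refine (TopologicalSpace.denseRange_denseSeq (range ψ)).equalizer a.continuous
        b.continuous (funext fun n => ?_)
      simp only [Function.comp_apply, ← hc, ha, hb, hpq]
    rw [← ha, ← hb, hab]
  let θ : Q → ℕ → ℝ := fun p n => F p (c n)
  have hθ : Continuous θ := continuous_pi fun n => (hF₂ (c n)).comp continuous_subtype_val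
  have : CompactSpace (range θ) := isCompact_iff_compactSpace.mp (isCompact_range hθ)
  have hfac : ∀ x : M, ∃ k : C(range θ, ℝ), ∀ p : Q, k ⟨θ p, mem_range_self p⟩ = F p x :=
    fun x => exists_factor_range hθ ((hF₂ x).comp continuous_subtype_val)
      fun p q hpq => hdet p p.2 q q.2 (fun n => congrFun hpq n) x
  choose k hk using hfac
  have hdist : ∀ a b, a ≠ b → ε < dist (k (m a)) (k (m b)) := by
    intro a b hab
    obtain ⟨i, hi⟩ := hsep a b hab
    have h := ContinuousMap.dist_apply_le_dist (f := k (m a)) (g := k (m b))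
      ⟨θ ⟨d i, subset_closure (mem_range_self i)⟩, mem_range_self _⟩
    rw [hk, hk, Real.dist_eq] at h
    exact hi.trans_le h
  have hnear : ∀ b, ∃ n, dist (k (m b)) (TopologicalSpace.denseSeq C(range θ, ℝ) n) < ε / 2 :=
    fun b => (TopologicalSpace.denseRange_denseSeq _).exists_dist_lt _ (half_pos hε)
  choose j hj using hnear
  refine Function.Injective.countable (f := j) fun a b hab => ?_
  by_contra hne
  have h1 := hj a
  have h2 := hj b
  rw [← hab] at h2
  have := dist_triangle_right (k (m a)) (k (m b)) (TopologicalSpace.denseSeq C(range θ, ℝ) (j a))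
  linarith [hdist a b hne]

/-- A separately continuous function on `P × M` has oscillation at most `ε` in the second variable,
uniformly in the first, over some nonempty open subset of `M`. Otherwise a binary tree of
nonempty open sets can be built in which the two children of each node are `ε`-separated by some
`p`; its branches would give an uncountable family contradicting `countable_of_separated`. -/
theorem exists_open_small_oscillation {P M : Type*} [TopologicalSpace P] [CompactSpace P]
    [TopologicalSpace M] [CompactSpace M] [T2Space M] [Nonempty M]
    {F : P → M → ℝ} (hF₁ : ∀ p, Continuous (F p)) (hF₂ : ∀ m, Continuous fun p => F p m)
    {ε : ℝ} (hε : 0 < ε) :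
    ∃ U : Set M, IsOpen U ∧ U.Nonempty ∧ ∀ p, ∀ x ∈ U, ∀ y ∈ U, |F p x - F p y| ≤ ε := by
  by_contra! hbad
  let O := {U : Set M // IsOpen U ∧ U.Nonempty}
  have hstep : ∀ U : O, ∃ (V : Bool → O) (p : P), (∀ b, closure (V b).1 ⊆ U.1) ∧
      ∀ x ∈ (V false).1, ∀ y ∈ (V true).1, ε < |F p x - F p y| := by
    rintro ⟨U, hU, hUne⟩
    obtain ⟨p, x, hx, y, hy, hxy⟩ := hbad U hU hUne
    have hopen : IsOpen {z : M × M | ε < |F p z.1 - F p z.2|} :=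
      isOpen_lt continuous_const
        (((hF₁ p).comp continuous_fst).sub ((hF₁ p).comp continuous_snd)).abs
    obtain ⟨A, B, hA, hB, hxA, hyB, hAB⟩ := isOpen_prod_iff.1 hopen x y hxy
    have hshrink : ∀ {z : M} {W : Set M}, IsOpen W → z ∈ W →
        ∃ V : Set M, IsOpen V ∧ z ∈ V ∧ closure V ⊆ W := by
      intro z W hW hz
      obtain ⟨V, hV, hzV, hVW⟩ := isCompact_singleton.exists_isOpen_closure_subset
        (K := {z}) (U := W) (by simpa using hW.mem_nhds hz)
      exact ⟨V, hV, hzV rfl, hVW⟩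
    obtain ⟨A', hA', hxA', hAA⟩ := hshrink (hA.inter hU) ⟨hxA, hx⟩
    obtain ⟨B', hB', hyB', hBB⟩ := hshrink (hB.inter hU) ⟨hyB, hy⟩
    refine ⟨fun b => bif b then ⟨B', hB', y, hyB'⟩ else ⟨A', hA', x, hxA'⟩, p, ?_, ?_⟩
    · rintro (_ | _)
      · exact hAA.trans inter_subset_right
      · exact hBB.trans inter_subset_right
    · intro a ha b hb
      exact hAB (mk_mem_prod (hAA (subset_closure ha)).1 (hBB (subset_closure hb)).1)
  choose V p hV hp using hstep
  let node : List Bool → O :=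
    List.foldr (fun b U => V U b) ⟨univ, isOpen_univ, univ_nonempty⟩
  -- `word β n` lists the first `n` values of the branch `β`, the latest one at the head.
  let word : (ℕ → Bool) → ℕ → List Bool := fun β n => Nat.rec [] (fun k l => β k :: l) n
  have hsucc : ∀ β n, node (word β (n + 1)) = V (node (word β n)) (β n) := fun _ _ => rfl
  have hpt : ∀ β : ℕ → Bool, ∃ x, ∀ n, x ∈ (node (word β n)).1 := by
    intro β
    obtain ⟨x, hx⟩ := IsCompact.nonempty_iInter_of_sequence_nonempty_isCompact_isClosed
      (fun n => closure (node (word β n)).1)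
      (fun n => by
        rw [hsucc]
        exact (hV _ _).trans subset_closure)
      (fun n => (node (word β n)).2.2.closure) isClosed_closure.isCompact
      (fun n => isClosed_closure)
    refine ⟨x, fun n => ?_⟩
    have := mem_iInter.1 hx (n + 1)
    rw [hsucc] at this
    exact hV _ _ this
  choose x hx using hpt
  have hcount : Countable (ℕ → Bool) := by
    refine countable_of_separated hF₁ hF₂ (fun l => p (node l)) x hε fun α β hαβ => ?_
    -- The branches are compared at the first index at which they differ.
    have hex : ∃ n, α n ≠ β n := Function.ne_iff.1 hαβ
    classical
    let n := Nat.find hex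
    have hn : α n ≠ β n := Nat.find_spec hex
    have hw : ∀ k ≤ n, word α k = word β k := by
      intro k
      induction k with
      | zero => intro _; rfl
      | succ k ih =>
        intro hk
        have h1 : α k = β k := not_not.1 (Nat.find_min hex (Nat.lt_of_succ_le hk))
        change α k :: word α k = β k :: word β k
        rw [h1, ih (Nat.le_of_succ_le hk)]
    have hα := hx α (n + 1)
    have hβ := hx β (n + 1)
    rw [hsucc] at hα hβ
    rw [← hw n le_rfl] at hβ
    refine ⟨word α n, ?_⟩
    rcases hαn : α n with _ | _ <;> rcases hβn : β n with _ | _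
    · exact absurd (hαn.trans hβn.symm) hn
    · rw [hαn] at hα; rw [hβn] at hβ
      exact hp _ _ hα _ hβ
    · rw [hαn] at hα; rw [hβn] at hβ
      rw [abs_sub_comm]
      exact hp _ _ hβ _ hα
    · exact absurd (hαn.trans hβn.symm) hn
  obtain ⟨j, hj⟩ := hcount.exists_injective_nat
  classical
  refine Function.cantor_injective (fun A : Set ℕ => j fun n => decide (n ∈ A)) fun A B hAB => ?_
  ext n
  simpa using congrFun (hj hAB) n
end SeparateContinuity

/-! ### Minimal left ideals of compact semitopological monoids -/

section MinimalIdeal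
open Set Filter Topology

variable {Γ E : Type*} [Group Γ] [Monoid E] [TopologicalSpace E] [CompactSpace E] [T2Space E]

/-- In a completely regular space convergence can be tested against continuous real functions. -/
theorem tendsto_of_forall_continuous {X α : Type*} [TopologicalSpace X] [CompletelyRegularSpace X]
    {f : Filter α} {x : α → X} {a : X}
    (h : ∀ φ : C(X, ℝ), Tendsto (fun i => φ (x i)) f (𝓝 (φ a))) : Tendsto x f (𝓝 a) := by
  rw [tendsto_nhds]
  intro U hU haU
  obtain ⟨φ, hφ, h0, h1⟩ := CompletelyRegularSpace.completely_regular a Uᶜ hU.isClosed_compl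
    (not_not.2 haU)
  have hlim := h ⟨fun y => (φ y : ℝ), continuous_subtype_val.comp hφ⟩
  have hlt : ∀ᶠ i in f, ((φ (x i) : ℝ)) < 1 :=
    hlim.eventually (gt_mem_nhds (by simp [h0]))
  filter_upwards [hlt] with i hi
  by_contra hn
  have := h1 hn
  simp only [Pi.one_apply] at this
  rw [this] at hi
  simp at hi

/-- A minimal nonempty closed subset of `E` that is stable under left multiplication by the
elements `ι g`. -/
structure IsMinimalLeft (ι : Γ →* E) (L : Set E) : Prop where
  closed : IsClosed L
  nonempty : L.Nonempty
  stable : ∀ g, ∀ l ∈ L, ι g * l ∈ L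
  minimal : ∀ C ⊆ L, IsClosed C → C.Nonempty → (∀ g, ∀ l ∈ C, ι g * l ∈ C) → C = L

theorem exists_isMinimalLeft (ι : Γ →* E) : ∃ L : Set E, IsMinimalLeft ι L := by
  let 𝒮 : Set (Set E) := {L | IsClosed L ∧ L.Nonempty ∧ ∀ g, ∀ l ∈ L, ι g * l ∈ L}
  have huniv : (univ : Set E) ∈ 𝒮 := ⟨isClosed_univ, ⟨1, trivial⟩, fun _ _ _ => trivial⟩
  obtain ⟨L, -, hL⟩ := zorn_superset_nonempty 𝒮 (fun c hc hchain hne => by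
    refine ⟨⋂₀ c, ⟨isClosed_sInter fun s hs => (hc hs).1, ?_, ?_⟩, fun s hs => sInter_subset_of_mem hs⟩
    · have : Nonempty c := hne.to_subtype
      exact IsCompact.nonempty_sInter_of_directed_nonempty_isCompact_isClosed
        (fun a ha b hb => (hchain.total ha hb).elim
          (fun h => ⟨a, ha, subset_rfl, h⟩) fun h => ⟨b, hb, h, subset_rfl⟩)
        (fun s hs => (hc hs).2.1) (fun s hs => (hc hs).1.isCompact)
        (fun s hs => (hc hs).1)
    · intro g l hl s hs
      exact (hc hs).2.2 g l (hl s hs)) univ huniv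
  exact ⟨L, hL.prop.1, hL.prop.2.1, hL.prop.2.2, fun C hCL hC hne hst =>
    hCL.antisymm (hL.le_of_le ⟨hC, hne, hst⟩ hCL)⟩

theorem IsMinimalLeft.mul_mem {ι : Γ →* E} {L : Set E} (hL : IsMinimalLeft ι L)
    (hι : DenseRange ι) (hr : ∀ q : E, Continuous fun p : E => p * q) (p : E) {l : E} (hl : l ∈ L) :
    p * l ∈ L := by
  have hcl : IsClosed {p : E | p * l ∈ L} := hL.closed.preimage (hr l)
  have : closure (range ι) ⊆ {p : E | p * l ∈ L} :=
    closure_minimal (by rintro _ ⟨g, rfl⟩; exact hL.stable g l hl) hcl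
  exact this (hι p)

/-- Every element of `L` generates `L` as a left ideal. -/
theorem IsMinimalLeft.exists_mul_eq {ι : Γ →* E} {L : Set E} (hL : IsMinimalLeft ι L)
    (hι : DenseRange ι) (hr : ∀ q : E, Continuous fun p : E => p * q) {l m : E}
    (hl : l ∈ L) (hm : m ∈ L) : ∃ q ∈ L, q * l = m := by
  have : (fun p => p * l) '' L = L := by
    refine hL.minimal _ ?_ ?_ (hL.nonempty.image _) ?_
    · rintro _ ⟨p, -, rfl⟩
      exact hL.mul_mem hι hr p hl
    · exact (hL.closed.isCompact.image (hr l)).isClosed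
    · rintro g _ ⟨p, hp, rfl⟩
      exact ⟨ι g * p, hL.stable g p hp, mul_assoc _ _ _⟩
  rw [← this] at hm
  exact hm

/-- A point of `L` can be moved by some `ι g` into any prescribed nonempty relatively open
subset of `L`. -/
theorem IsMinimalLeft.exists_mul_mem {ι : Γ →* E} {L : Set E} (hL : IsMinimalLeft ι L)
    (hl : ∀ p : E, Continuous fun q : E => p * q) {U : Set E} (hU : IsOpen U)
    (hLU : (L ∩ U).Nonempty) {l : E} (hlL : l ∈ L) : ∃ g, ι g * l ∈ U := by
  by_contra! hn
  have hC : {x ∈ L | ∀ g, ι g * x ∉ U} = L := by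
    refine hL.minimal _ (fun x hx => hx.1) ?_ ⟨l, hlL, hn⟩ ?_
    · have : {x ∈ L | ∀ g, ι g * x ∉ U} = L ∩ ⋂ g, (fun x => ι g * x) ⁻¹' Uᶜ := by
        ext x; simp
      rw [this]
      exact hL.closed.inter (isClosed_iInter fun g => hU.isClosed_compl.preimage (hl _))
    · rintro g x ⟨hx, hxU⟩
      refine ⟨hL.stable g x hx, fun g' => ?_⟩
      rw [← mul_assoc, ← map_mul]
      exact hxU _
  obtain ⟨x, hxL, hxU⟩ := hLU
  rw [← hC] at hxL
  exact hxL.2 1 (by simpa using hxU)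

/-- Multiplication is jointly continuous on `E × L`. For a test function `φ`, some relatively open
subset of `L` has small oscillation under all `φ (p * ·)`, and by minimality every point of `L`
can be moved into it by an invertible element. -/
theorem IsMinimalLeft.continuousOn_mul {ι : Γ →* E} {L : Set E} (hL : IsMinimalLeft ι L)
    (hl : ∀ p : E, Continuous fun q : E => p * q) (hr : ∀ q : E, Continuous fun p : E => p * q) :
    ContinuousOn (fun x : E × E => x.1 * x.2) (univ ×ˢ L) := by
  rintro ⟨p₀, l₀⟩ ⟨-, hl₀⟩
  refine tendsto_of_forall_continuous fun φ => ?_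
  have : CompactSpace L := isCompact_iff_compactSpace.mp hL.closed.isCompact
  have : Nonempty L := hL.nonempty.to_subtype
  rw [Metric.tendsto_nhds]
  intro ε hε
  obtain ⟨U, hU, ⟨z, hz⟩, hosc⟩ := exists_open_small_oscillation (P := E) (M := L)
    (F := fun p l => φ (p * l))
    (fun p => φ.continuous.comp ((hl p).comp continuous_subtype_val))
    (fun l => φ.continuous.comp (hr l)) (half_pos hε)
  obtain ⟨U', hU', rfl⟩ := isOpen_induced_iff.1 hU
  obtain ⟨g, hg⟩ := hL.exists_mul_mem hl hU' ⟨z, z.2, hz⟩ hl₀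
  -- Translation by `g` preserves the oscillation because `p * l = (p * ι g⁻¹) * (ι g * l)`.
  have h1 : ∀ᶠ x : E × E in 𝓝[univ ×ˢ L] (p₀, l₀), |φ (x.1 * x.2) - φ (x.1 * l₀)| ≤ ε / 2 := by
    have hV : ∀ᶠ x : E × E in 𝓝[univ ×ˢ L] (p₀, l₀), ι g * x.2 ∈ U' :=
      nhdsWithin_le_nhds
        ((((hl (ι g)).comp continuous_snd).tendsto (p₀, l₀)).eventually (hU'.mem_nhds hg))
    filter_upwards [hV, self_mem_nhdsWithin] with x hx hxL
    have key := hosc (x.1 * ι g⁻¹) ⟨ι g * x.2, hL.stable g _ hxL.2⟩ hx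
      ⟨ι g * l₀, hL.stable g _ hl₀⟩ hg
    have hcancel : ∀ y, x.1 * ι g⁻¹ * (ι g * y) = x.1 * y := fun y => by
      rw [mul_assoc, ← mul_assoc (ι g⁻¹), ← map_mul, inv_mul_cancel, map_one, one_mul]
    simpa only [hcancel] using key
  have h2 : ∀ᶠ x : E × E in 𝓝[univ ×ˢ L] (p₀, l₀), |φ (x.1 * l₀) - φ (p₀ * l₀)| < ε / 2 :=
    nhdsWithin_le_nhds
      (Metric.tendsto_nhds.1 (((φ.continuous.comp (hr l₀)).comp continuous_fst).tendsto (p₀, l₀))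
        _ (half_pos hε))
  filter_upwards [h1, h2] with x hx1 hx2
  rw [Real.dist_eq]
  have := abs_sub_le (φ (x.1 * x.2)) (φ (x.1 * l₀)) (φ (p₀ * l₀))
  linarith

/-- Joint continuity lets one pass to the limit in `ι g⁻¹ * (ι g * w) = w` as `ι g → u`, so an
element `w` of `L` is determined by `u * w`. -/
theorem IsMinimalLeft.idempotent_unique {ι : Γ →* E} {L : Set E} (hL : IsMinimalLeft ι L)
    (hι : DenseRange ι)
    (hl : ∀ p : E, Continuous fun q : E => p * q) (hr : ∀ q : E, Continuous fun p : E => p * q)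
    {u v : E} (hu : u ∈ L) (hv : v ∈ L) (huu : u * u = u) (hvv : v * v = v) : u = v := by
  have huv : u * v = u := by
    obtain ⟨q, -, rfl⟩ := hL.exists_mul_eq hι hr hv hu
    rw [mul_assoc, hvv]
  -- Along an ultrafilter, `ι g` tends to `u` and `ι g⁻¹` to some `r`.
  have hne : (comap ι (𝓝 u)).NeBot :=
    comap_neBot fun t ht => by
      obtain ⟨_, hyt, g, rfl⟩ := mem_closure_iff_nhds.1 (hι u) t ht
      exact ⟨g, hyt⟩
  let 𝒰 : Ultrafilter Γ := Ultrafilter.of (comap ι (𝓝 u))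
  have hg : Tendsto ι 𝒰 (𝓝 u) := tendsto_comap.mono_left (Ultrafilter.of_le _)
  let r : E := (𝒰.map fun g => ι g⁻¹).lim
  have hginv : Tendsto (fun g => ι g⁻¹) 𝒰 (𝓝 r) := (𝒰.map fun g => ι g⁻¹).le_nhds_lim
  have key : ∀ w ∈ L, u * w = u → r * u = w := by
    intro w hw huw
    have h1 : Tendsto (fun g => ι g * w) 𝒰 (𝓝 u) := by
      have := ((hr w).tendsto u).comp hg
      rwa [huw] at this
    have h2 : Tendsto (fun g => (ι g⁻¹, ι g * w)) 𝒰 (𝓝[univ ×ˢ L] (r, u)) :=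
      tendsto_nhdsWithin_iff.2 ⟨hginv.prodMk_nhds h1,
        Eventually.of_forall fun g => ⟨trivial, hL.stable g w hw⟩⟩
    have h3 := (hL.continuousOn_mul hl hr (r, u) ⟨trivial, hu⟩).tendsto.comp h2
    refine tendsto_nhds_unique h3 (tendsto_const_nhds.congr fun g => ?_)
    simp only [Function.comp_apply]
    rw [← mul_assoc, ← map_mul, inv_mul_cancel, map_one, one_mul]
  rw [← key u hu huu, key v hv huv]

/-- The minimal left ideal `L` is a group. -/
theorem IsMinimalLeft.exists_identity {ι : Γ →* E} {L : Set E} (hL : IsMinimalLeft ι L)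
    (hι : DenseRange ι)
    (hl : ∀ p : E, Continuous fun q : E => p * q) (hr : ∀ q : E, Continuous fun p : E => p * q) :
    ∃ u ∈ L, (∀ l ∈ L, u * l = l) ∧ (∀ l ∈ L, l * u = l) ∧ ∀ l ∈ L, ∃ q ∈ L, q * l = u := by
  obtain ⟨u, hu, huu⟩ := exists_idempotent_in_compact_subsemigroup hr L hL.nonempty
    hL.closed.isCompact fun x _ y hy => hL.mul_mem hι hr x hy
  refine ⟨u, hu, fun l hlL => ?_, fun l hlL => ?_, fun l hlL => hL.exists_mul_eq hι hr hlL hu⟩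
  · -- The closed semigroup of `q ∈ L` fixing `l` contains an idempotent, which has to be `u`.
    obtain ⟨q, hq, hql⟩ := hL.exists_mul_eq hι hr hlL hlL
    obtain ⟨v, ⟨hvL, hvl⟩, hvv⟩ := exists_idempotent_in_compact_subsemigroup hr
      {q | q ∈ L ∧ q * l = l} ⟨q, hq, hql⟩
      (hL.closed.inter (isClosed_singleton.preimage (hr l))).isCompact
      fun x hx y hy => ⟨hL.mul_mem hι hr x hy.1, by rw [mul_assoc, hy.2, hx.2]⟩
    rwa [hL.idempotent_unique hι hl hr hu hvL huu hvv]
  · obtain ⟨q, -, rfl⟩ := hL.exists_mul_eq hι hr hu hlL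
    rw [mul_assoc, huu]

/-- In a compact semitopological monoid with a dense homomorphic image of a group there is a
minimal left ideal that is a group and whose identity element is central. -/
theorem exists_isMinimalLeft_central (ι : Γ →* E) (hι : DenseRange ι)
    (hl : ∀ p : E, Continuous fun q : E => p * q) (hr : ∀ q : E, Continuous fun p : E => p * q) :
    ∃ L : Set E, IsMinimalLeft ι L ∧ ∃ u ∈ L, (∀ l ∈ L, u * l = l) ∧ (∀ l ∈ L, l * u = l) ∧
      (∀ l ∈ L, ∃ q ∈ L, q * l = u) ∧ ∀ q, u * q = q * u := by
  obtain ⟨L, hL⟩ := exists_isMinimalLeft ι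
  obtain ⟨u, hu, hul, hlu, hinv⟩ := hL.exists_identity hι hl hr
  -- The same facts in the opposite monoid concern a minimal right ideal.
  have hι' : DenseRange ι.op := by
    have h := MulOpposite.opHomeomorph.surjective.denseRange.comp hι
      MulOpposite.opHomeomorph.continuous (f := ι) (g := (MulOpposite.opHomeomorph : E ≃ₜ Eᵐᵒᵖ))
    intro x
    refine closure_mono ?_ (h x)
    rintro _ ⟨g, rfl⟩
    exact ⟨MulOpposite.op g, rfl⟩
  have hl' : ∀ p : Eᵐᵒᵖ, Continuous fun q : Eᵐᵒᵖ => p * q := fun p =>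
    MulOpposite.continuous_op.comp ((hr p.unop).comp MulOpposite.continuous_unop)
  have hr' : ∀ q : Eᵐᵒᵖ, Continuous fun p : Eᵐᵒᵖ => p * q := fun q =>
    MulOpposite.continuous_op.comp ((hl q.unop).comp MulOpposite.continuous_unop)
  obtain ⟨R, hR⟩ := exists_isMinimalLeft ι.op
  obtain ⟨v', hv, hvr, hrv, -⟩ := hR.exists_identity hι' hl' hr'
  obtain ⟨v, rfl⟩ := MulOpposite.op_surjective v'
  have hRmul : ∀ r q : E, MulOpposite.op r ∈ R → MulOpposite.op (r * q) ∈ R := fun r q hrR =>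
    hR.mul_mem hι' hr' (MulOpposite.op q) hrR
  have hRv : ∀ r : E, MulOpposite.op r ∈ R → v * r = r := fun r hrR =>
    MulOpposite.op_injective (hrv _ hrR)
  have hRv' : ∀ r : E, MulOpposite.op r ∈ R → r * v = r := fun r hrR =>
    MulOpposite.op_injective (hvr _ hrR)
  -- `v * u` is an idempotent of both groups, so the two identities agree.
  have hvuL : v * u ∈ L := hL.mul_mem hι hr v hu
  have hvuR : MulOpposite.op (v * u) ∈ R := hRmul v u hv
  have hidem : v * u * (v * u) = v * u := by
    rw [mul_assoc, hul _ hvuL, ← mul_assoc, hRv v hv]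
  have h1 : v * u = u := hL.idempotent_unique hι hl hr hvuL hu hidem (hul u hu)
  have h2 : v * u = v := MulOpposite.op_injective
    (hR.idempotent_unique hι' hl' hr' hvuR hv (congrArg MulOpposite.op hidem)
      (congrArg MulOpposite.op (hRv v hv)))
  have huv : v = u := h2.symm.trans h1
  subst huv
  refine ⟨L, hL, v, hu, hul, hlu, hinv, fun q => ?_⟩
  calc v * q = v * q * v := (hRv' _ (hRmul v q hv)).symm
    _ = q * v := by rw [mul_assoc, hul _ (hL.mul_mem hι hr q hu)]

end MinimalIdeal

/-! ### Invariant measures on compact semitopological monoids -/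

section HaarMeasure
open Set Filter Topology Measure

theorem continuousInv_of_compactSpace {K : Type*} [Group K] [TopologicalSpace K] [CompactSpace K]
    [T2Space K] [ContinuousMul K] : ContinuousInv K := by
  refine ⟨continuous_iff_ultrafilter.2 fun x 𝒰 h𝒰 => ?_⟩
  have hy := (𝒰.map fun k => k⁻¹).le_nhds_lim
  have hlim : Tendsto (fun k : K => k * k⁻¹) 𝒰 (𝓝 (x * (𝒰.map fun k => k⁻¹).lim)) :=
    Tendsto.mul h𝒰 hy
  have h1 : x * (𝒰.map fun k => k⁻¹).lim = 1 :=
    tendsto_nhds_unique hlim (tendsto_const_nhds.congr fun k => (mul_inv_cancel k).symm)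
  rw [inv_eq_of_mul_eq_one_right h1]
  exact hy

/-- Invariance under a dense set of translations suffices, since `k ↦ ∫ f (k * x) ∂ν` is
continuous for continuous `f`. -/
theorem isMulLeftInvariant_of_dense {K I : Type*} [Group K] [TopologicalSpace K] [CompactSpace K]
    [T2Space K] [IsTopologicalGroup K] [MeasurableSpace K] [BorelSpace K] (ν : Measure K)
    [IsFiniteMeasure ν] [ν.Regular] (a : I → K) (ha : DenseRange a)
    (hν : ∀ i, ν.map (a i * ·) = ν) : ν.IsMulLeftInvariant := by
  refine ⟨fun k => ?_⟩
  refine Measure.ext_of_integral_eq_on_compactlySupported fun f => ?_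
  have htrans : ∀ k : K, ∫ x, f x ∂(ν.map (k * ·)) = ∫ x, f (k * x) ∂ν := fun k =>
    integral_map (continuous_const_mul k).aemeasurable f.continuous.aestronglyMeasurable
  have hcont : Continuous fun k : K => ∫ x, f (k * x) ∂ν := by
    rw [← continuousOn_univ]
    exact continuousOn_integral_of_compact_support (k := univ) isCompact_univ
      (f.continuous.comp continuous_mul).continuousOn (fun _ x _ hx => absurd trivial hx)
  have heq : (fun k : K => ∫ x, f (k * x) ∂ν) = fun _ => ∫ x, f x ∂ν :=
    ha.equalizer hcont continuous_const (funext fun i => by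
      simp only [Function.comp_apply]
      rw [← htrans, hν])
  rw [htrans]
  exact congrFun heq k

theorem regular_map_of_continuous {X Y : Type*} [TopologicalSpace X] [MeasurableSpace X]
    [BorelSpace X] [TopologicalSpace Y] [MeasurableSpace Y] [BorelSpace Y] [T2Space Y]
    (μ : Measure X) [IsFiniteMeasure μ] [μ.Regular] {f : X → Y} (hf : Continuous f) :
    (μ.map f).Regular := by
  have : InnerRegularCompactLTTop (μ.map f) := InnerRegularCompactLTTop.map_of_continuous hf
  infer_instance

variable {Γ E : Type*} [Group Γ] [Monoid E] [TopologicalSpace E] [CompactSpace E] [T2Space E]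
  [MeasurableSpace E] [BorelSpace E]

/-- A compact semitopological monoid with a dense homomorphic image of a group carries a
regular probability measure, invariant under left multiplication by that image, which is the
only one among those living on `{q | u * q = q}` for a certain idempotent `u`. -/
theorem exists_measure_unique_on_fixed (ι : Γ →* E) (hι : DenseRange ι)
    (hl : ∀ p : E, Continuous fun q : E => p * q) (hr : ∀ q : E, Continuous fun p : E => p * q) :
    ∃ u : E, u * u = u ∧ ∃ μ₀ : Measure E,
      (IsProbabilityMeasure μ₀ ∧ μ₀.Regular ∧ ∀ g, μ₀.map (ι g * ·) = μ₀) ∧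
      ∀ μ : Measure E, IsProbabilityMeasure μ → μ.Regular → (∀ g, μ.map (ι g * ·) = μ) →
        μ {q | u * q ≠ q} = 0 → μ = μ₀ := by
  obtain ⟨L, hL, u, hu, hul, hlu, hinv, hcentral⟩ := exists_isMinimalLeft_central ι hι hl hr
  choose! inv hinvL hinv using hinv
  have hmul : ∀ (p : E) {l : E}, l ∈ L → p * l ∈ L := fun p _ hlL => hL.mul_mem hι hr p hlL
  let : Mul L := ⟨fun a b => ⟨a * b, hmul a b.2⟩⟩
  let : One L := ⟨⟨u, hu⟩⟩
  let : Inv L := ⟨fun a => ⟨inv a, hinvL a a.2⟩⟩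
  let : Group L := Group.ofLeftAxioms (fun a b c => Subtype.ext (mul_assoc _ _ _))
    (fun a => Subtype.ext (hul a a.2)) (fun a => Subtype.ext (hinv a a.2))
  have : CompactSpace L := isCompact_iff_compactSpace.mp hL.closed.isCompact
  have : ContinuousMul L := ⟨by
    have h : Continuous fun x : L × L => (x.1 : E) * (x.2 : E) :=
      (hL.continuousOn_mul hl hr).comp_continuous
        (f := fun x : L × L => ((x.1 : E), (x.2 : E))) (by fun_prop)
        (fun x => ⟨trivial, x.2.2⟩)
    exact h.subtype_mk _⟩
  have : ContinuousInv L := continuousInv_of_compactSpace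
  have : IsTopologicalGroup L := {}
  let haarL : Measure L := haarMeasure ⊤
  have : IsProbabilityMeasure haarL := ⟨haarMeasure_self (K₀ := ⊤)⟩
  let ρ : E → L := fun q => ⟨q * u, hmul q hu⟩
  have hρ : Continuous ρ := (hr u).subtype_mk _
  have hρL : ∀ l : L, ρ l = l := fun l => Subtype.ext (hlu l l.2)
  have hval : Continuous (Subtype.val : L → E) := continuous_subtype_val
  have hρmul : ∀ p q, ρ (p * q) = ρ p * ρ q := fun p q => Subtype.ext (by
    change p * q * u = p * u * (q * u)
    rw [mul_assoc p u, hul _ (hmul q hu), mul_assoc])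
  have hact : ∀ g (l : L), ι g * (l : E) = ((ρ (ι g) * l : L) : E) := fun g l => by
    change _ = ι g * u * (l : E)
    rw [mul_assoc, hul l l.2]
  refine ⟨u, hul u hu, haarL.map Subtype.val, ⟨?_, ?_, fun g => ?_⟩, ?_⟩
  · exact isProbabilityMeasure_map hval.aemeasurable
  · exact regular_map_of_continuous haarL hval
  · rw [Measure.map_map (hl _).measurable hval.measurable]
    have : (fun x => ι g * x) ∘ (Subtype.val : L → E) = Subtype.val ∘ fun l => ρ (ι g) * l :=
      funext fun l => hact g l
    rw [this, ← Measure.map_map hval.measurable (continuous_const_mul _).measurable,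
      map_mul_left_eq_self]
  · intro μ hμ hμr hμinv hμu
    let ν : Measure L := μ.map ρ
    have : IsProbabilityMeasure ν := isProbabilityMeasure_map hρ.aemeasurable
    have : ν.Regular := regular_map_of_continuous μ hρ
    have hdense : DenseRange fun g => ρ (ι g) :=
      (show Function.Surjective ρ from fun l => ⟨l, hρL l⟩).denseRange.comp hι hρ
    have : ν.IsMulLeftInvariant := by
      refine isMulLeftInvariant_of_dense ν _ hdense fun g => ?_
      rw [Measure.map_map (continuous_const_mul _).measurable hρ.measurable]
      have : (fun x => ρ (ι g) * x) ∘ ρ = ρ ∘ fun q => ι g * q :=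
        funext fun q => (hρmul _ _).symm
      rw [this, ← Measure.map_map hρ.measurable (hl _).measurable, hμinv]
    have : ν.IsHaarMeasure :=
      isHaarMeasure_of_isCompact_nonempty_interior ν univ isCompact_univ (by simp) (by simp)
        (by simp)
    have hν : ν = haarL := isHaarMeasure_eq_of_isProbabilityMeasure ν haarL
    -- As `u` is central, `q * u = q` for `μ`-almost every `q`.
    have hae : (Subtype.val ∘ ρ : E → E) =ᵐ[μ] id := by
      refine measure_mono_null (fun q hq => ?_) hμu
      intro h
      exact hq ((hcentral q).symm.trans h)
    rw [← hν, Measure.map_map hval.measurable hρ.measurable, Measure.map_congr hae, Measure.map_id]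

end HaarMeasure

/-! ### The Ellis semigroup of a weakly almost periodic flow -/

section EllisMonoid
open Set Filter Topology

/-- The Ellis semigroup is a monoid under composition. -/
instance ellisMonoid : Monoid (EllisSemigroup G S) where
  mul p q := ⟨(p : S → S) ∘ (q : S → S), by
    have hcl : IsClosed {r : S → S | r ∘ (q : S → S) ∈ EllisSemigroup G S} :=
      isClosed_closure.preimage (continuous_pi fun x => continuous_apply ((q : S → S) x))
    exact closure_minimal (by rintro _ ⟨g, rfl⟩; exact ellisAct_mem g q.2) hcl p.2⟩
  one := ⟨id, subset_closure ⟨1, funext fun x => one_smul G x⟩⟩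
  mul_assoc _ _ _ := rfl
  one_mul _ := rfl
  mul_one _ := rfl

theorem ellis_mul_apply (p q : EllisSemigroup G S) (x : S) :
    (p * q : EllisSemigroup G S).1 x = p.1 (q.1 x) := rfl

/-- The homomorphism sending `g` to its action map. -/
def ellisHom : G →* EllisSemigroup G S where
  toFun g := ⟨fun x => g • x, subset_closure ⟨g, rfl⟩⟩
  map_one' := Subtype.ext (funext fun x => one_smul G x)
  map_mul' g h := Subtype.ext (funext fun x => mul_smul g h x)

theorem ellisHom_mul (g : G) : (fun p : EllisSemigroup G S => ellisHom g * p) = ellisAct g := rfl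

theorem denseRange_ellisHom : DenseRange (ellisHom : G →* EllisSemigroup G S) := by
  rintro ⟨p, hp⟩
  rw [closure_subtype]
  refine closure_mono ?_ hp
  rintro _ ⟨g, rfl⟩
  exact ⟨_, ⟨g, rfl⟩, rfl⟩

instance inst_s6 : CompactSpace (EllisSemigroup G S) :=
  isCompact_iff_compactSpace.mp isClosed_closure.isCompact

theorem continuous_ellis_apply (x : S) : Continuous fun p : EllisSemigroup G S => p.1 x :=
  (continuous_apply x).comp continuous_subtype_val

theorem continuous_ellis_mul_right (q : EllisSemigroup G S) :
    Continuous fun p : EllisSemigroup G S => p * q :=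
  Continuous.subtype_mk (continuous_pi fun x => continuous_ellis_apply (q.1 x)) _

/-- Composing `f` with an element of the Ellis semigroup stays within the weak closure of the
orbit of `f`: the pointwise topology is Hausdorff and coarser than the weak one, so the weakly
compact orbit closure is also closed pointwise. -/
theorem IsWAPFlow.exists_comp (hwap : IsWAPFlow G S) (p : EllisSemigroup G S) (f : C(S, ℂ)) :
    ∃ w : C(S, ℂ), (∀ x, w x = f (p.1 x)) ∧
      toWeakSpace ℂ C(S, ℂ) w ∈ closure ((toWeakSpace ℂ C(S, ℂ)) ''
        (Set.range fun g : G => f.comp (smulCM g⁻¹ : C(S, S)))) := by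
  set W := closure ((toWeakSpace ℂ C(S, ℂ)) ''
    (Set.range fun g : G => f.comp (smulCM g⁻¹ : C(S, S)))) with hW
  let Φ : WeakSpace ℂ C(S, ℂ) → S → ℂ := fun w x => (toWeakSpace ℂ C(S, ℂ)).symm w x
  have hΦ : Continuous Φ := continuous_pi fun x =>
    WeakBilin.eval_continuous (topDualPairing ℂ C(S, ℂ)).flip (ContinuousMap.evalCLM ℂ x)
  have hcl : IsClosed {q : S → S | (fun x => f (q x)) ∈ Φ '' W} :=
    ((hwap f).image hΦ).isClosed.preimage
      (continuous_pi fun x => f.continuous.comp (continuous_apply x))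
  have hmem : (p : S → S) ∈ {q : S → S | (fun x => f (q x)) ∈ Φ '' W} := by
    refine closure_minimal ?_ hcl p.2
    rintro _ ⟨g, rfl⟩
    refine ⟨toWeakSpace ℂ C(S, ℂ) (f.comp (smulCM g)),
      subset_closure ⟨_, ⟨g⁻¹, by simp⟩, rfl⟩, ?_⟩
    funext x
    simp only [Φ, LinearEquiv.symm_apply_apply]
    rfl
  obtain ⟨w, hwW, hw⟩ := hmem
  refine ⟨(toWeakSpace ℂ C(S, ℂ)).symm w, fun x => congrFun hw x, ?_⟩
  rwa [LinearEquiv.apply_symm_apply]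

theorem IsWAPFlow.continuous_ellis (hwap : IsWAPFlow G S) (p : EllisSemigroup G S) :
    Continuous p.1 := by
  refine continuous_iff_continuousAt.2 fun x => tendsto_of_forall_continuous fun φ => ?_
  obtain ⟨w, hw, -⟩ := hwap.exists_comp p ⟨fun y => (φ y : ℂ), by fun_prop⟩
  have : (fun y => φ (p.1 y)) = fun y => (w y).re := funext fun y => by simp [hw]
  have hc : Continuous fun y => φ (p.1 y) := by
    rw [this]
    fun_prop
  exact hc.tendsto x

theorem IsWAPFlow.continuous_ellis_mul_left (hwap : IsWAPFlow G S) (p : EllisSemigroup G S) :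
    Continuous fun q : EllisSemigroup G S => p * q :=
  Continuous.subtype_mk
    (continuous_pi fun x => (hwap.continuous_ellis p).comp (continuous_ellis_apply x)) _

variable [MeasurableSpace (EllisSemigroup G S)] [BorelSpace (EllisSemigroup G S)]

theorem integrable_ellis_apply {𝕜 : Type*} [RCLike 𝕜] (μ : Measure (EllisSemigroup G S))
    [IsFiniteMeasure μ] (x : S) {f : S → 𝕜} (hf : Continuous f) :
    Integrable (fun q : EllisSemigroup G S => f (q.1 x)) μ :=
  (hf.comp (continuous_ellis_apply x)).integrable_of_hasCompactSupport
    (HasCompactSupport.of_compactSpace _)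

/-- Integration of `f (q x)` against an invariant measure is a weakly continuous functional of
`f` that is constant on orbits, hence it does not see composition with `p`. -/
theorem IsWAPFlow.integral_comp (hwap : IsWAPFlow G S) (μ : Measure (EllisSemigroup G S))
    [IsProbabilityMeasure μ] (hμ : ∀ g : G, μ.map (ellisAct g) = μ)
    (p : EllisSemigroup G S) (x : S) {φ : S → ℝ} (hφ : Continuous φ) :
    ∫ q : EllisSemigroup G S, φ (p.1 (q.1 x)) ∂μ = ∫ q : EllisSemigroup G S, φ (q.1 x) ∂μ := by
  let Λ : StrongDual ℂ C(S, ℂ) := LinearMap.mkContinuous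
    { toFun := fun f => ∫ q : EllisSemigroup G S, f (q.1 x) ∂μ
      map_add' := fun f f' => integral_add (integrable_ellis_apply μ x f.continuous)
        (integrable_ellis_apply μ x f'.continuous)
      map_smul' := fun c f => integral_const_mul c _ } 1 (fun f => by
        have := norm_integral_le_of_norm_le_const (μ := μ)
          (f := fun q : EllisSemigroup G S => f (q.1 x)) (C := ‖f‖)
          (Eventually.of_forall fun q => f.norm_coe_le_norm _)
        simpa using this)
  have hΛ : ∀ f : C(S, ℂ), Λ f = ∫ q : EllisSemigroup G S, f (q.1 x) ∂μ := fun _ => rfl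
  let f : C(S, ℂ) := ⟨fun y => (φ y : ℂ), by fun_prop⟩
  obtain ⟨w, hw, hwcl⟩ := hwap.exists_comp p f
  have hcl : IsClosed {v : WeakSpace ℂ C(S, ℂ) | Λ ((toWeakSpace ℂ C(S, ℂ)).symm v) = Λ f} :=
    isClosed_eq (WeakBilin.eval_continuous (topDualPairing ℂ C(S, ℂ)).flip Λ) continuous_const
  have hmem := closure_minimal (t := {v | Λ ((toWeakSpace ℂ C(S, ℂ)).symm v) = Λ f}) (by
    rintro _ ⟨_, ⟨g, rfl⟩, rfl⟩
    simp only [mem_ofPred_eq, LinearEquiv.symm_apply_apply]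
    have hact : Continuous (ellisAct g⁻¹ : EllisSemigroup G S → EllisSemigroup G S) := by
      rw [← ellisHom_mul]
      exact hwap.continuous_ellis_mul_left _
    rw [hΛ, hΛ]
    conv_rhs => rw [← hμ g⁻¹]
    exact (integral_map hact.aemeasurable
      (f.continuous.comp (continuous_ellis_apply x)).aestronglyMeasurable).symm) hcl hwcl
  simp only [mem_ofPred_eq, LinearEquiv.symm_apply_apply] at hmem
  rw [hΛ, hΛ] at hmem
  simp only [hw, f, ContinuousMap.coe_mk] at hmem
  rw [integral_complex_ofReal, integral_complex_ofReal] at hmem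
  exact_mod_cast hmem

/-- For an idempotent `u` the functions `φ ∘ u` and `φ` agree almost everywhere along
`q ↦ q x`: expanding the square and using invariance and `u ∘ u = u`, all three integrals equal
that of `φ ^ 2`. -/
theorem IsWAPFlow.ae_eq_comp (hwap : IsWAPFlow G S) (μ : Measure (EllisSemigroup G S))
    [IsProbabilityMeasure μ] (hμ : ∀ g : G, μ.map (ellisAct g) = μ)
    {u : EllisSemigroup G S} (hu : u * u = u) (x : S) {φ : S → ℝ} (hφ : Continuous φ) :
    ∀ᵐ q : EllisSemigroup G S ∂μ, φ (u.1 (q.1 x)) = φ (q.1 x) := by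
  have huc : Continuous u.1 := hwap.continuous_ellis u
  have huu : ∀ y, u.1 (u.1 y) = u.1 y := fun y => by rw [← ellis_mul_apply, hu]
  have h1 := hwap.integral_comp μ hμ u x (φ := fun y => φ y ^ 2) (by fun_prop)
  have h2 := hwap.integral_comp μ hμ u x (φ := fun y => φ (u.1 y) * φ y) (by fun_prop)
  simp only [huu, ← pow_two] at h2
  have hzero : ∫ q : EllisSemigroup G S, (φ (u.1 (q.1 x)) - φ (q.1 x)) ^ 2 ∂μ = 0 := by
    have hexp : ∀ q : EllisSemigroup G S, (φ (u.1 (q.1 x)) - φ (q.1 x)) ^ 2 =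
        φ (u.1 (q.1 x)) ^ 2 - 2 * (φ (u.1 (q.1 x)) * φ (q.1 x)) + φ (q.1 x) ^ 2 :=
      fun q => by ring
    have i1 : Integrable (fun q : EllisSemigroup G S => φ (u.1 (q.1 x)) ^ 2) μ :=
      integrable_ellis_apply μ x (f := fun y => φ (u.1 y) ^ 2) (by fun_prop)
    have i2 : Integrable (fun q : EllisSemigroup G S => φ (u.1 (q.1 x)) * φ (q.1 x)) μ :=
      integrable_ellis_apply μ x (f := fun y => φ (u.1 y) * φ y) (by fun_prop)
    have i3 : Integrable (fun q : EllisSemigroup G S => φ (q.1 x) ^ 2) μ :=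
      integrable_ellis_apply μ x (f := fun y => φ y ^ 2) (by fun_prop)
    have i12 : Integrable (fun q : EllisSemigroup G S =>
        φ (u.1 (q.1 x)) ^ 2 - 2 * (φ (u.1 (q.1 x)) * φ (q.1 x))) μ := i1.sub (i2.const_mul 2)
    simp only [hexp]
    rw [integral_add i12 i3, integral_sub i1 (i2.const_mul 2), integral_const_mul, ← h2, ← h1]
    ring
  have hae := (integral_eq_zero_iff_of_nonneg (μ := μ) (fun q => sq_nonneg _)
    (integrable_ellis_apply μ x (f := fun y => (φ (u.1 y) - φ y) ^ 2) (by fun_prop))).1 hzero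
  filter_upwards [hae] with q hq
  exact sub_eq_zero.1 (pow_eq_zero_iff two_ne_zero |>.1 hq)

/-- The open set `{q | u * q ≠ q}` is covered by open null sets, so it is null by inner
regularity. -/
theorem IsWAPFlow.measure_ne_eq_zero (hwap : IsWAPFlow G S) (μ : Measure (EllisSemigroup G S))
    [IsProbabilityMeasure μ] [μ.Regular] (hμ : ∀ g : G, μ.map (ellisAct g) = μ)
    {u : EllisSemigroup G S} (hu : u * u = u) :
    μ {q : EllisSemigroup G S | u * q ≠ q} = 0 := by
  have hopen : IsOpen {q : EllisSemigroup G S | u * q ≠ q} :=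
    isOpen_ne_fun (hwap.continuous_ellis_mul_left u) continuous_id
  rw [hopen.measure_eq_iSup_isCompact]
  simp only [ENNReal.iSup_eq_zero]
  intro K hKU hK
  refine hK.measure_zero_of_nhdsWithin fun q hq => ?_
  obtain ⟨x, hx⟩ : ∃ x, u.1 (q.1 x) ≠ q.1 x := by
    by_contra! h
    exact hKU hq (Subtype.ext (funext h))
  obtain ⟨φ, hφ, h0, h1⟩ := CompletelyRegularSpace.completely_regular (u.1 (q.1 x)) {q.1 x}
    isClosed_singleton hx
  have hφ' : Continuous fun y => (φ y : ℝ) := continuous_subtype_val.comp hφ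
  refine ⟨{r | (φ (u.1 (r.1 x)) : ℝ) ≠ φ (r.1 x)}, mem_nhdsWithin_of_mem_nhds
    (IsOpen.mem_nhds ?_ ?_), hwap.ae_eq_comp μ hμ hu x hφ'⟩
  · exact isOpen_ne_fun (hφ'.comp ((hwap.continuous_ellis u).comp (continuous_ellis_apply x)))
      (hφ'.comp (continuous_ellis_apply x))
  · have h1' := h1 (mem_singleton (q.1 x))
    simp [h0, h1']

end EllisMonoid

/-- **Ellis–Nerurkar, part (c).** If `S` is a weakly almost periodic `G`-flow, then there is
exactly one regular Borel probability measure on the Ellis semigroup `E(S)` that is invariant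
under the `G`-action `g • p = (x ↦ g • x) ∘ p`. -/
theorem ellis_nerurkar_c [MeasurableSpace (EllisSemigroup G S)]
    [BorelSpace (EllisSemigroup G S)] (hwap : IsWAPFlow G S) :
    ∃! μ : Measure (EllisSemigroup G S),
      IsProbabilityMeasure μ ∧ μ.Regular ∧
        ∀ g : G, μ.map (ellisAct g) = μ := by
  obtain ⟨u, hu, μ₀, ⟨hprob, hreg, hinv⟩, huniq⟩ := exists_measure_unique_on_fixed
    (ellisHom : G →* EllisSemigroup G S) denseRange_ellisHom hwap.continuous_ellis_mul_left
    continuous_ellis_mul_right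
  refine ⟨μ₀, ⟨hprob, hreg, hinv⟩, ?_⟩
  rintro μ ⟨hμ, hμr, hμinv⟩
  exact huniq μ hμ hμr hμinv (hwap.measure_ne_eq_zero μ hμinv hu)
end

section
/- Let S be a G-flow with Ellis semigroup E = E(S). Suppose K ⊆ E is a left ideal of the semigroup (E, ∘) (i.e., p ∘ q ∈ K for all p ∈ E and q ∈ K) that is a group under composition, and let u be the identity element of this group. Suppose further that u commutes with every element of E. Define τ* : E → K by τ*(p) = p ∘ u. Then τ* is continuous, surjective, a semigroup homomorphism (τ*(p ∘ q) = τ*(p) ∘ τ*(q) for all p, q ∈ E), and G-equivariant in the sense that τ*(g·p) = g·τ*(p) for all g ∈ G and p ∈ E. -/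
set_option linter.unusedSectionVars false

variable {G : Type*} [Group G] {S : Type*} [TopologicalSpace S] [CompactSpace S] [T2Space S]
  [Nonempty S] [MulAction G S] [ContinuousConstSMul G S]

/-- Suppose `K ⊆ E(S)` is a left ideal of `(E(S), ∘)` that is a group under composition with
identity `u`, and `u` commutes with every element of `E(S)`. Then the map `τ* : p ↦ p ∘ u` is
continuous, maps `E(S)` onto `K`, is a semigroup homomorphism, and is `G`-equivariant. -/
theorem tauStar_props (K : Set (S → S)) (hKE : K ⊆ EllisSemigroup G S)
    (hideal : ∀ p ∈ EllisSemigroup G S, ∀ q ∈ K, p ∘ q ∈ K)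
    (hmul : ∀ p ∈ K, ∀ q ∈ K, p ∘ q ∈ K)
    (u : S → S) (hu : u ∈ K)
    (hid : ∀ p ∈ K, u ∘ p = p ∧ p ∘ u = p)
    (hinv : ∀ p ∈ K, ∃ q ∈ K, p ∘ q = u ∧ q ∘ p = u)
    (hcomm : ∀ q ∈ EllisSemigroup G S, u ∘ q = q ∘ u) :
    Continuous (fun p : EllisSemigroup G S => (p : S → S) ∘ u) ∧
    (∀ p ∈ EllisSemigroup G S, p ∘ u ∈ K) ∧
    (∀ q ∈ K, ∃ p ∈ EllisSemigroup G S, p ∘ u = q) ∧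
    (∀ p ∈ EllisSemigroup G S, ∀ q ∈ EllisSemigroup G S,
      (p ∘ q) ∘ u = (p ∘ u) ∘ (q ∘ u)) ∧
    (∀ (g : G), ∀ p ∈ EllisSemigroup G S,
      ((fun x : S => g • x) ∘ p) ∘ u = (fun x : S => g • x) ∘ (p ∘ u)) := by
  refine ⟨continuous_pi fun x => (continuous_apply (u x)).comp continuous_subtype_val,
    fun p hp => hideal p hp u hu, fun q hq => ⟨q, hKE hq, (hid q hq).2⟩, fun p _ q hq => ?_,
    fun _ _ _ => rfl⟩
  -- `q ∘ u` lies in the left ideal `K`, so the identity `u` of `K` is absorbed on its left.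
  rw [Function.comp_assoc p u, (hid _ (hideal q hq u hu)).1, Function.comp_assoc]
end

section
/- Let S be a weakly almost periodic G-flow. Then the Ellis semigroup E(S), regarded as a G-flow via g·p = (x ↦ g·x) ∘ p, is also weakly almost periodic. -/
/-!
Let `E` be the Ellis semigroup of the weakly almost periodic flow `S`.

Every `p ∈ E` is continuous: for `f ∈ C(S)`, the function `f ∘ p` is a pointwise limit of functions
in the orbit of `f`, which is weakly relatively compact, so `f ∘ p` is a weak limit point of that
orbit and lies in `C(S)` (`continuous_comp_of_mem_ellis`, `continuous_of_mem_ellis`). Hence the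
multiplication of `E` is separately continuous. For `f ∈ C(E)` put `f_p (q) = f (p ∘ q)`. Then
`p ↦ f_p` maps the compact space `E` into a bounded subset of `C(E)`, continuously for pointwise
convergence, and its range contains the orbit of `f`. It remains to see that this map is weakly
continuous, for then the orbit lies in a weakly compact set.

That is Grothendieck's theorem comparing pointwise and weak compactness in `C(K)`
(`continuous_toWeakSpace_of_pointwise`). It has two ingredients. First, in a pointwise compact
family every closure point is the limit of a sequence (`exists_seq_tendsto_pointwise`): compactness
of the powers of `K` reduces to a countable subfamily, which factors through a metrizable quotient
of `K`, where convergence on a countable dense set suffices. Second, bounded pointwise convergent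
sequences converge weakly (`tendsto_dual_of_pointwise`): a bounded functional `φ` satisfies
`‖φ g‖ ≤ |φ| (|g|)`, where the modulus `|φ|` is additive and positive, so the
Riesz–Markov–Kakutani theorem represents it by a measure and dominated convergence applies.
-/

set_option linter.unusedSectionVars false

open MeasureTheory

variable {G : Type*} [Group G] {S : Type*} [TopologicalSpace S] [CompactSpace S] [T2Space S]
  [Nonempty S] [MulAction G S] [ContinuousConstSMul G S]

instance : CompactSpace (EllisSemigroup G S) :=
  isCompact_iff_compactSpace.mp (IsClosed.isCompact isClosed_closure)

theorem ellisAct_continuous (g : G) :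
    Continuous (ellisAct g : EllisSemigroup G S → EllisSemigroup G S) := by
  apply Continuous.subtype_mk
  exact continuous_pi fun x =>
    (continuous_const_smul g).comp ((continuous_apply x).comp continuous_subtype_val)

/-- The `G`-action on the Ellis semigroup, as a continuous self-map. -/
def ellisActCM (g : G) : C(EllisSemigroup G S, EllisSemigroup G S) :=
  ⟨ellisAct g, ellisAct_continuous g⟩

/-! ### The modulus of a functional on `C(K, ℂ)` -/

section Modulus

open Filter Topology
open scoped NNReal CompactlySupported

variable {K : Type*} [TopologicalSpace K] [CompactSpace K]

/-- The values `‖φ g‖` over all continuous `g` dominated in absolute value by `h`. -/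
def modulusSet (φ : C(K, ℂ) →L[ℂ] ℂ) (h : C_c(K, ℝ≥0)) : Set ℝ :=
  {r | ∃ g : C(K, ℂ), (∀ x, ‖g x‖ ≤ h x) ∧ ‖φ g‖ = r}

theorem modulusSet_nonempty (φ : C(K, ℂ) →L[ℂ] ℂ) (h : C_c(K, ℝ≥0)) :
    (modulusSet φ h).Nonempty :=
  ⟨0, 0, by simp, by simp⟩

theorem modulusSet_bddAbove (φ : C(K, ℂ) →L[ℂ] ℂ) (h : C_c(K, ℝ≥0)) :
    BddAbove (modulusSet φ h) := by
  obtain ⟨C, hC⟩ := (isCompact_range h.continuous).bddAbove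
  refine ⟨‖φ‖ * C, ?_⟩
  rintro _ ⟨g, hg, rfl⟩
  refine (φ.le_opNorm g).trans ?_
  gcongr
  refine (ContinuousMap.norm_le _ C.2).2 fun x => (hg x).trans ?_
  exact_mod_cast hC ⟨x, rfl⟩

theorem modulusSet_add_subset (φ : C(K, ℂ) →L[ℂ] ℂ) (h₁ h₂ : C_c(K, ℝ≥0)) {a b : ℝ}
    (ha : a ∈ modulusSet φ h₁) (hb : b ∈ modulusSet φ h₂) : a + b ∈ modulusSet φ (h₁ + h₂) := by
  -- Rotating each competitor makes its value under `φ` a nonnegative real number.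
  have rot : ∀ (h : C_c(K, ℝ≥0)) (c : ℝ), c ∈ modulusSet φ h →
      ∃ g : C(K, ℂ), (∀ x, ‖g x‖ ≤ h x) ∧ φ g = (c : ℂ) := by
    rintro h _ ⟨g, hg, rfl⟩
    obtain ⟨u, hu, hu'⟩ := RCLike.exists_norm_eq_mul_self (K := ℂ) (φ g)
    refine ⟨u • g, fun x => ?_, ?_⟩
    · simpa [hu] using hg x
    · rw [map_smul, smul_eq_mul, ← hu']; rfl
  obtain ⟨g₁, hg₁, e₁⟩ := rot _ _ ha
  obtain ⟨g₂, hg₂, e₂⟩ := rot _ _ hb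
  have ha0 : 0 ≤ a := by obtain ⟨_, _, rfl⟩ := ha; positivity
  have hb0 : 0 ≤ b := by obtain ⟨_, _, rfl⟩ := hb; positivity
  refine ⟨g₁ + g₂, fun x => ?_, ?_⟩
  · simpa using (norm_add_le _ _).trans (add_le_add (hg₁ x) (hg₂ x))
  · rw [map_add, e₁, e₂, ← Complex.ofReal_add, Complex.norm_real,
      Real.norm_of_nonneg (by positivity)]

/-- The modulus `|φ|` of a bounded functional on `C(K, ℂ)`, evaluated at a nonnegative function `h`:
the supremum of `‖φ g‖` over `|g| ≤ h`. -/
noncomputable def modulus (φ : C(K, ℂ) →L[ℂ] ℂ) (h : C_c(K, ℝ≥0)) : ℝ := sSup (modulusSet φ h)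

theorem le_modulus (φ : C(K, ℂ) →L[ℂ] ℂ) (h : C_c(K, ℝ≥0)) (g : C(K, ℂ))
    (hg : ∀ x, ‖g x‖ ≤ h x) : ‖φ g‖ ≤ modulus φ h :=
  le_csSup (modulusSet_bddAbove φ h) ⟨g, hg, rfl⟩

theorem modulus_nonneg (φ : C(K, ℂ) →L[ℂ] ℂ) (h : C_c(K, ℝ≥0)) : 0 ≤ modulus φ h := by
  simpa using le_modulus φ h 0 (by simp)

theorem modulus_add (φ : C(K, ℂ) →L[ℂ] ℂ) (h₁ h₂ : C_c(K, ℝ≥0)) :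
    modulus φ (h₁ + h₂) = modulus φ h₁ + modulus φ h₂ := by
  apply le_antisymm
  · refine csSup_le (modulusSet_nonempty _ _) ?_
    rintro _ ⟨g, hg, rfl⟩
    have key : ∀ ε : ℝ, 0 < ε → ‖φ g‖ ≤ modulus φ h₁ + modulus φ h₂ + ‖φ‖ * ε := by
      intro ε hε
      have hpos : ∀ x, 0 < (h₁ x : ℝ) + h₂ x + ε := fun x => by positivity
      have hne : ∀ x, ((h₁ x : ℝ) : ℂ) + (h₂ x : ℝ) + (ε : ℝ) ≠ 0 := fun x => by
        exact_mod_cast (hpos x).ne'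
      have c₁ : Continuous fun x => ((h₁ x : ℝ) : ℂ) := by
        have := h₁.continuous; fun_prop
      have c₂ : Continuous fun x => ((h₂ x : ℝ) : ℂ) := by
        have := h₂.continuous; fun_prop
      have hgx : ∀ x, ‖g x‖ ≤ (h₁ x : ℝ) + h₂ x + ε := fun x => by
        have := hg x
        simp at this
        linarith
      -- Multiplying `g` by `t / (h₁ + h₂ + ε)` gives a function dominated by `t`.
      let w : (t : K → ℝ) → (Continuous fun x => (t x : ℂ)) → C(K, ℂ) := fun t ht =>
        ⟨fun x => g x * (t x : ℂ) / (((h₁ x : ℝ) : ℂ) + (h₂ x : ℝ) + (ε : ℝ)), by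
          refine Continuous.div ?_ ?_ hne <;> fun_prop⟩
      have hw : ∀ t ht x, 0 ≤ t x → ‖w t ht x‖ ≤ t x := by
        intro t ht x h0
        have : ‖((h₁ x : ℝ) : ℂ) + (h₂ x : ℝ) + (ε : ℝ)‖ = (h₁ x : ℝ) + h₂ x + ε := by
          rw [← Complex.ofReal_add, ← Complex.ofReal_add, Complex.norm_real,
            Real.norm_of_nonneg (hpos x).le]
        simp only [w, ContinuousMap.coe_mk, norm_div, norm_mul, this, Complex.norm_real,
          Real.norm_of_nonneg h0]
        rw [div_le_iff₀ (hpos x), mul_comm]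
        exact mul_le_mul_of_nonneg_left (hgx x) h0
      have hsum : g = w (fun x => h₁ x) c₁ + w (fun x => h₂ x) c₂
          + w (fun _ => ε) continuous_const := by
        ext x
        simp only [w, ContinuousMap.add_apply, ContinuousMap.coe_mk]
        have := hne x
        field_simp
      rw [hsum, map_add, map_add]
      refine (norm_add₃_le).trans ?_
      gcongr
      · exact le_modulus _ _ _ fun x => hw _ c₁ x (by positivity)
      · exact le_modulus _ _ _ fun x => hw _ c₂ x (by positivity)
      · refine (φ.le_opNorm _).trans ?_
        gcongr
        exact (ContinuousMap.norm_le _ hε.le).2 fun x => hw _ continuous_const x hε.le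
    refine le_of_forall_pos_le_add fun δ hδ => ?_
    refine (key (δ / (‖φ‖ + 1)) (by positivity)).trans ?_
    gcongr
    rw [mul_div_assoc', div_le_iff₀ (by positivity)]
    nlinarith [norm_nonneg φ]
  · unfold modulus
    rw [← csSup_add (modulusSet_nonempty _ _) (modulusSet_bddAbove _ _) (modulusSet_nonempty _ _)
      (modulusSet_bddAbove _ _)]
    refine csSup_le_csSup (modulusSet_bddAbove _ _)
      ((modulusSet_nonempty _ _).add (modulusSet_nonempty _ _)) ?_
    rintro _ ⟨a, ha, b, hb, rfl⟩
    exact modulusSet_add_subset φ h₁ h₂ ha hb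

theorem modulus_smul (φ : C(K, ℂ) →L[ℂ] ℂ) (c : ℝ≥0) (h : C_c(K, ℝ≥0)) :
    modulus φ (c • h) = c * modulus φ h := by
  have ge : ∀ (c : ℝ≥0) (h : C_c(K, ℝ≥0)), c * modulus φ h ≤ modulus φ (c • h) := by
    intro c h
    rcases eq_or_ne c 0 with rfl | hc
    · simpa using modulus_nonneg φ _
    have hc' : (0 : ℝ) < c := by positivity
    rw [← le_div_iff₀' hc']
    refine csSup_le (modulusSet_nonempty _ _) ?_
    rintro _ ⟨g, hg, rfl⟩
    rw [le_div_iff₀' hc']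
    have := le_modulus φ (c • h) (((c : ℝ) : ℂ) • g) fun x => by
      simpa using mul_le_mul_of_nonneg_left (hg x) c.2
    simpa using this
  refine le_antisymm ?_ (ge c h)
  rcases eq_or_ne c 0 with rfl | hc
  · have := modulus_add φ 0 0
    simp at this
    simp [this]
  have hc' : (0 : ℝ) < c := by positivity
  have := ge c⁻¹ (c • h)
  rw [inv_smul_smul₀ hc, NNReal.coe_inv, inv_mul_le_iff₀ hc'] at this
  exact this

/-- The modulus `|φ|` as an `ℝ≥0`-linear functional, the form in which the
Riesz–Markov–Kakutani theorem represents it by a measure. -/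
noncomputable def modulusLin (φ : C(K, ℂ) →L[ℂ] ℂ) : C_c(K, ℝ≥0) →ₗ[ℝ≥0] ℝ≥0 where
  toFun h := ⟨modulus φ h, modulus_nonneg φ h⟩
  map_add' h₁ h₂ := NNReal.eq (modulus_add φ h₁ h₂)
  map_smul' c h := NNReal.eq (modulus_smul φ c h)

/-- A bounded pointwise convergent sequence in `C(K, ℂ)` converges weakly: dominated convergence
for the measure representing the modulus of the functional. -/
theorem tendsto_dual_of_pointwise [T2Space K] (φ : C(K, ℂ) →L[ℂ] ℂ) (u : ℕ → C(K, ℂ))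
    (v : C(K, ℂ)) (C : ℝ) (hC : ∀ n, ‖u n‖ ≤ C)
    (huv : ∀ x, Tendsto (fun n => u n x) atTop (𝓝 (v x))) :
    Tendsto (fun n => φ (u n)) atTop (𝓝 (φ v)) := by
  borelize K
  let μ := NNRealRMK.rieszMeasure (modulusLin φ)
  let H : C(K, ℂ) → C_c(K, ℝ≥0) := fun g =>
    CompactlySupportedContinuousMap.continuousMapEquiv ⟨fun x => ‖g x‖₊, by fun_prop⟩
  have hbound : ∀ g : C(K, ℂ), ‖φ g‖ ≤ ∫ x, ‖g x‖ ∂μ := by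
    intro g
    refine (le_modulus φ (H g) g fun x => le_rfl).trans (le_of_eq ?_)
    exact (NNRealRMK.integral_rieszMeasure (modulusLin φ) (H g)).symm
  have hint : Tendsto (fun n => ∫ x, ‖(u n - v) x‖ ∂μ) atTop (𝓝 (∫ _, (0 : ℝ) ∂μ)) := by
    refine tendsto_integral_of_dominated_convergence (fun _ => C + ‖v‖) (fun n => ?_)
      (integrable_const _) (fun n => ?_) ?_
    · exact (by fun_prop : Continuous fun x => ‖(u n - v) x‖).aestronglyMeasurable
    · refine Eventually.of_forall fun x => ?_
      rw [norm_norm]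
      exact ((u n - v).norm_coe_le_norm x).trans ((norm_sub_le _ _).trans (by gcongr; exact hC n))
    · refine Eventually.of_forall fun x => ?_
      simpa using tendsto_iff_norm_sub_tendsto_zero.1 (huv x)
  rw [integral_zero] at hint
  rw [tendsto_iff_norm_sub_tendsto_zero]
  refine squeeze_zero (fun _ => norm_nonneg _) (fun n => ?_) hint
  rw [← map_sub]
  exact hbound _

end Modulus

/-! ### Pointwise and weak compactness in `C(K, ℂ)` -/

section Grothendieck

open Filter Topology

variable {T K : Type*} [TopologicalSpace T] [CompactSpace T] [TopologicalSpace K] [CompactSpace K]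

/-- Countable tightness of the topology of pointwise convergence on `C(K, ℂ)`: a point of a closure
is in the closure of a countable subset, because each power `Kⁿ` is compact. -/
theorem exists_countable_tight (F : T → C(K, ℂ)) (hF : ∀ x, Continuous fun t => F t x)
    {A : Set T} {t : T} (ht : t ∈ closure A) :
    ∃ B ⊆ A, B.Countable ∧ ∀ (n : ℕ) (x : Fin n → K),
      ∃ b ∈ B, ∀ i, dist (F b (x i)) (F t (x i)) < 1 / (n + 1) := by
  have step : ∀ n : ℕ, ∃ B ⊆ A, B.Finite ∧ ∀ x : Fin n → K,
      ∃ b ∈ B, ∀ i, dist (F b (x i)) (F t (x i)) < 1 / ((n : ℝ) + 1) := by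
    intro n
    let U : T → Set (Fin n → K) := fun b =>
      {x | ∀ i, dist (F b (x i)) (F t (x i)) < 1 / ((n : ℝ) + 1)}
    have hU : ∀ b ∈ A, IsOpen (U b) := by
      intro b _
      simp only [U, Set.ofPred_forall]
      exact isOpen_iInter_of_finite fun i => isOpen_lt (by fun_prop) continuous_const
    have hcov : (Set.univ : Set (Fin n → K)) ⊆ ⋃ b ∈ A, U b := by
      intro x _
      have hopen : IsOpen {s : T | ∀ i, dist (F s (x i)) (F t (x i)) < 1 / ((n : ℝ) + 1)} := by
        simp only [Set.ofPred_forall]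
        exact isOpen_iInter_of_finite fun i =>
          isOpen_lt ((hF (x i)).dist continuous_const) continuous_const
      obtain ⟨b, hb, hbA⟩ := mem_closure_iff.1 ht _ hopen (fun i => by simp; positivity)
      exact Set.mem_biUnion hbA hb
    obtain ⟨B, hBA, hBf, hB⟩ := isCompact_univ.elim_finite_subcover_image hU hcov
    refine ⟨B, hBA, hBf, fun x => ?_⟩
    simpa [U] using hB (Set.mem_univ x)
  choose B hBA hBf hB using step
  refine ⟨⋃ n, B n, Set.iUnion_subset hBA, Set.countable_iUnion fun n => (hBf n).countable,
    fun n x => ?_⟩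
  obtain ⟨b, hb, h⟩ := hB n x
  exact ⟨b, Set.mem_iUnion_of_mem n hb, h⟩

/-- A pointwise compact family in `C(K, ℂ)` is Fréchet–Urysohn: a point of a closure is the pointwise
limit of a sequence. -/
theorem exists_seq_tendsto_pointwise [Nonempty K] (F : T → C(K, ℂ))
    (hF : ∀ x, Continuous fun t => F t x) {A : Set T} {t : T} (ht : t ∈ closure A) :
    ∃ b : ℕ → T, (∀ n, b n ∈ A) ∧ ∀ x, Tendsto (fun n => F (b n) x) atTop (𝓝 (F t x)) := by
  obtain ⟨B, hBA, hBc, hB⟩ := exists_countable_tight F hF ht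
  have hB'c : (insert t B).Countable := hBc.insert t
  have := hB'c.to_subtype
  -- `h` maps `K` onto a compact metrizable space through which `F t` and all `F b`, `b ∈ B`, factor;
  -- the points `d n` are chosen with dense image there.
  let h : K → (↥(insert t B) → ℂ) := fun x s => F s x
  have hcont : Continuous h := continuous_pi fun s => (F s).continuous
  have hmem : ∀ n, ∃ d : K, h d = TopologicalSpace.denseSeq (Set.range h) n := fun n =>
    (TopologicalSpace.denseSeq (Set.range h) n).2
  choose d hd using hmem
  choose b hbB hb using fun n : ℕ => hB n (fun i => d i)
  refine ⟨b, fun n => hBA (hbB n), fun x => ?_⟩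
  have hbd : ∀ i, Tendsto (fun n => F (b n) (d i)) atTop (𝓝 (F t (d i))) := by
    intro i
    rw [tendsto_iff_dist_tendsto_zero]
    refine squeeze_zero' (Eventually.of_forall fun _ => dist_nonneg) ?_
      (tendsto_one_div_add_atTop_nhds_zero_nat (𝕜 := ℝ))
    filter_upwards [eventually_gt_atTop i] with n hn
    exact (hb n ⟨i, hn⟩).le
  -- It suffices to identify every ultrafilter limit `F s` of `F (b n)` with `F t`. They agree at the
  -- points `d i`, and both factor through `h`, so they agree everywhere.
  rw [tendsto_iff_ultrafilter]
  intro U hU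
  obtain ⟨s, -, hs⟩ := isCompact_univ.ultrafilter_le_nhds (U.map b) (by simp)
  have hlim : ∀ y, Tendsto (fun n => F (b n) y) U (𝓝 (F s y)) := fun y =>
    ((hF y).tendsto s).comp hs
  have hst : ∀ i, F s (d i) = F t (d i) := fun i =>
    tendsto_nhds_unique (hlim (d i)) ((hbd i).mono_left hU)
  have hclosed : IsClosed (h '' {y | F s y = F t y}) :=
    ((isClosed_eq (F s).continuous (F t).continuous).isCompact.image hcont).isClosed
  have hx : h x ∈ h '' {y | F s y = F t y} := by
    have hdense := TopologicalSpace.denseRange_denseSeq (Set.range h)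
    have hx' : (⟨h x, x, rfl⟩ : Set.range h) ∈ (Subtype.val ⁻¹' (h '' {y | F s y = F t y})) := by
      refine closure_minimal ?_ (hclosed.preimage continuous_subtype_val) (hdense _)
      rintro _ ⟨n, rfl⟩
      exact ⟨d n, hst n, hd n⟩
    exact hx'
  obtain ⟨y, hy, hyx⟩ := hx
  have e : ∀ r ∈ insert t B, F r y = F r x := fun r hr => congrFun hyx ⟨r, hr⟩
  have hsy : F s x = F s y := by
    refine tendsto_nhds_unique (hlim x) ((hlim y).congr fun n => e _ (Or.inr (hbB n)))
  rw [← e t (Or.inl rfl), ← hy, ← hsy]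
  exact hlim x

/-- A form of Grothendieck's theorem: on a bounded, pointwise compact family in `C(K, ℂ)` the topology
of pointwise convergence is finer than the weak topology. -/
theorem continuous_toWeakSpace_of_pointwise [T2Space K] [Nonempty K] (F : T → C(K, ℂ))
    (hF : ∀ x, Continuous fun t => F t x) (C : ℝ) (hC : ∀ t, ‖F t‖ ≤ C) :
    Continuous fun t => toWeakSpace ℂ C(K, ℂ) (F t) := by
  refine WeakBilin.continuous_of_continuous_eval _ fun φ => ?_
  change Continuous fun t => φ (F t)
  rw [continuous_iff_image_closure_subset_closure_image]
  rintro A _ ⟨t, ht, rfl⟩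
  obtain ⟨b, hbA, hb⟩ := exists_seq_tendsto_pointwise F hF ht
  exact mem_closure_of_tendsto (tendsto_dual_of_pointwise φ (fun n => F (b n)) (F t) C
    (fun n => hC _) hb) (Eventually.of_forall fun n => ⟨b n, hbA n, rfl⟩)

end Grothendieck

/-! ### The Ellis semigroup of a weakly almost periodic flow -/

section Ellis

open Filter Topology

/-- If `p` is a limit of action maps, then `f ∘ p` is the pointwise limit of functions in the weakly
relatively compact orbit of `f`, hence agrees with a weak limit of them, which is continuous. -/
theorem continuous_comp_of_mem_ellis (hwap : IsWAPFlow G S) {p : S → S}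
    (hp : p ∈ EllisSemigroup G S) (f : C(S, ℂ)) : Continuous fun x => f (p x) := by
  obtain ⟨l, hl, hlp⟩ : ∃ l : Filter G, l.NeBot ∧
      Tendsto (fun g : G => fun x : S => g • x) l (𝓝 p) :=
    ⟨comap (fun g : G => fun x : S => g • x) (𝓝 p), comap_neBot fun t ht => by
      obtain ⟨_, h, ⟨g, rfl⟩⟩ := mem_closure_iff_nhds.1 hp t ht
      exact ⟨g, h⟩, tendsto_comap⟩
  let U : Ultrafilter G := Ultrafilter.of l
  let o : G → WeakSpace ℂ C(S, ℂ) := fun g => toWeakSpace ℂ C(S, ℂ) (f.comp (smulCM g))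
  have ho : ∀ g, o g ∈ closure ((toWeakSpace ℂ C(S, ℂ)) ''
      (Set.range fun g : G => f.comp (smulCM g⁻¹ : C(S, S)))) := fun g =>
    subset_closure ⟨_, ⟨g⁻¹, rfl⟩, by simp [o]⟩
  obtain ⟨v, -, hv⟩ := (hwap f).ultrafilter_le_nhds (U.map o)
    (le_principal_iff.2 (mem_map.2 (univ_mem' ho)))
  have hval : ∀ x, ((toWeakSpace ℂ C(S, ℂ)).symm v) x = f (p x) := by
    intro x
    have h1 : Tendsto (fun g : G => f (g • x)) U (𝓝 (((toWeakSpace ℂ C(S, ℂ)).symm v) x)) := by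
      have hev : Continuous fun w : WeakSpace ℂ C(S, ℂ) => ((toWeakSpace ℂ C(S, ℂ)).symm w) x :=
        WeakBilin.eval_continuous (topDualPairing ℂ C(S, ℂ)).flip
          (ContinuousMap.evalCLM ℂ x : C(S, ℂ) →L[ℂ] ℂ)
      exact (hev.tendsto v).comp hv
    have h2 : Tendsto (fun g : G => f (g • x)) U (𝓝 (f (p x))) :=
      (f.continuous.tendsto _).comp
        ((tendsto_pi_nhds.1 hlp x).mono_left (Ultrafilter.of_le l))
    exact tendsto_nhds_unique h1 h2
  simp_rw [← hval]
  exact ((toWeakSpace ℂ C(S, ℂ)).symm v).continuous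

/-- Every element of the Ellis semigroup of a weakly almost periodic flow is a continuous map. -/
theorem continuous_of_mem_ellis (hwap : IsWAPFlow G S) {p : S → S}
    (hp : p ∈ EllisSemigroup G S) : Continuous p := by
  rw [continuous_iff_continuousAt]
  intro x
  rw [ContinuousAt, (nhds_basis_opens (p x)).tendsto_right_iff]
  rintro U ⟨hxU, hU⟩
  obtain ⟨f, hf, hfx, hfU⟩ := CompletelyRegularSpace.completely_regular (p x) Uᶜ hU.isClosed_compl
    (by simpa using hxU)
  have hc := continuous_comp_of_mem_ellis hwap hp ⟨fun y => ((f y : ℝ) : ℂ), by fun_prop⟩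
  have hlt : ∀ᶠ y in 𝓝 x, ‖((f (p y) : ℝ) : ℂ)‖ < 1 :=
    hc.norm.continuousAt.eventually_lt_const (by simp [hfx])
  filter_upwards [hlt] with y hy
  by_contra hyU
  have : f (p y) = 1 := hfU hyU
  simp [this] at hy

theorem comp_mem_ellis {p q : S → S} (hp : p ∈ EllisSemigroup G S)
    (hq : q ∈ EllisSemigroup G S) : p ∘ q ∈ EllisSemigroup G S := by
  have hc : Continuous fun r : S → S => r ∘ q := continuous_pi fun x => continuous_apply (q x)
  refine closure_minimal ?_ (isClosed_closure.preimage hc) hp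
  rintro _ ⟨g, rfl⟩
  exact ellisAct_mem g hq

/-- Left multiplication `q ↦ p ∘ q` on the Ellis semigroup, continuous because `p` is. -/
def leftMulCM (hwap : IsWAPFlow G S) (p : EllisSemigroup G S) :
    C(EllisSemigroup G S, EllisSemigroup G S) where
  toFun q := ⟨(p : S → S) ∘ q, comp_mem_ellis p.2 q.2⟩
  continuous_toFun := Continuous.subtype_mk (continuous_pi fun x =>
    (continuous_of_mem_ellis hwap p.2).comp
      ((continuous_apply x).comp continuous_subtype_val)) _

theorem continuous_leftMulCM_apply (hwap : IsWAPFlow G S) (q : EllisSemigroup G S) :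
    Continuous fun p => leftMulCM hwap p q := by
  have hc : Continuous fun p : EllisSemigroup G S => (p : S → S) ∘ (q : S → S) :=
    continuous_pi fun x => (continuous_apply ((q : S → S) x)).comp continuous_subtype_val
  exact hc.subtype_mk _

end Ellis

/-- If `S` is a weakly almost periodic `G`-flow, then the Ellis semigroup `E(S)`, regarded as
a `G`-flow via `g • p = (x ↦ g • x) ∘ p`, is also weakly almost periodic. -/
theorem ellisSemigroup_isWAPFlow (hwap : IsWAPFlow G S) :
    ∀ f : C(EllisSemigroup G S, ℂ),
      IsCompact (closure ((toWeakSpace ℂ C(EllisSemigroup G S, ℂ)) ''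
        (Set.range fun g : G => f.comp (ellisActCM g⁻¹)))) := by
  intro f
  have hact : ∀ g : G, (fun x : S => g • x) ∈ EllisSemigroup G S := fun g =>
    subset_closure ⟨g, rfl⟩
  have : Nonempty (EllisSemigroup G S) := ⟨⟨_, hact 1⟩⟩
  have hcont := continuous_toWeakSpace_of_pointwise (fun p => f.comp (leftMulCM hwap p))
    (fun q => f.continuous.comp (continuous_leftMulCM_apply hwap q)) ‖f‖
    (fun p => (ContinuousMap.norm_le _ (norm_nonneg f)).2 fun q => f.norm_coe_le_norm _)
  refine (isCompact_range hcont).closure_of_subset ?_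
  rintro _ ⟨_, ⟨g, rfl⟩, rfl⟩
  exact ⟨⟨_, hact g⁻¹⟩, rfl⟩
end
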